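/- For each integer n ≥ 2 define J_n(r) = ∫₀^r sin^{n−1}(s/2) ds and V_n = (2/J_n(π)²) · ∫₀^π (J_n(u)²/sin^{n−1}(u/2)) · ( ∫_u^π (J_n(π) − J_n(s))² / sin^{n−1}(s/2) ds ) du. Then (n−1)²·V_n converges, as n → ∞, to 4N, where N = (2⁴/π) · ∫₀^{∞} e^{h₄²/2} · ( ∫₀^{h₄} e^{−x²/2} dx )² · ( ∫_{h₄}^{∞} e^{h₃²/2} · ( ∫_{h₃}^{∞} e^{−h₁²/2} dh₁ )² dh₃ ) dh₄, and this integral N is finite. -/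

import Mathlib

open Real Filter MeasureTheory Set

noncomputable def Jn (n : ℕ) (r : ℝ) : ℝ :=
  ∫ s in (0:ℝ)..r, Real.sin (s/2) ^ (n - 1)

noncomputable def VRP (n : ℕ) : ℝ :=
  (2 / (Jn n π)^2) *
    ∫ u in (0:ℝ)..π, ((Jn n u)^2 / Real.sin (u/2) ^ (n - 1)) *
      ∫ s in u..π, (Jn n π - Jn n s)^2 / Real.sin (s/2) ^ (n - 1)

noncomputable def NRP : ℝ :=
  (2^4 / π) * ∫ h₄ in Ioi (0:ℝ),
    Real.exp (h₄^2/2) * (∫ x in (0:ℝ)..h₄, Real.exp (-x^2/2))^2 *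
      ∫ h₃ in Ioi h₄,
        Real.exp (h₃^2/2) * (∫ h₁ in Ioi h₃, Real.exp (-h₁^2/2))^2

/-!
Let `w` be the density `sin ^ (n - 1) (s / 2)` seen from its maximum at `s = π`, with distances to
that point divided by `2 / √(n - 1)`. In these coordinates `V_n` is an explicit factor times the
integral over the wedge `0 ≤ k ≤ h` of `(∫₀ᵏ w)² / w k * ((∫ₕ^∞ w)² / w h)`, and `w x` is
`cos ^ (n - 1) (x / √(n - 1))`, which tends to `exp (-x² / 2)`. Dividing by a small tail of `w` does
no harm in the limit: the ratio of `w` to the Gaussian decreases on the half-line, starting from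
`1`, and this alone makes the integrand for `w` at most the integrand for the Gaussian. The latter
is integrable by Mills' bound on the Gaussian tail, so dominated convergence applies.
-/

namespace CoveringVariance

open scoped Topology

section Wedge

/-- The region of integration `0 ≤ k ≤ h` of the iterated integrals for the variance, where `k` and
`h` are the rescaled distances of the two diffusion positions from the far end. -/
def wedge : Set (ℝ × ℝ) := {p | 0 ≤ p.1 ∧ p.1 ≤ p.2}

lemma measurableSet_wedge : MeasurableSet wedge :=
  (measurableSet_le measurable_const measurable_fst).inter
    (measurableSet_le measurable_fst measurable_snd)

variable {E : Type*} [NormedAddCommGroup E] [NormedSpace ℝ E] {f : ℝ × ℝ → E}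

lemma setIntegral_wedge (hf : IntegrableOn f wedge) :
    ∫ p in wedge, f p = ∫ k in Ioi 0, ∫ h in Ioi k, f (k, h) := by
  have hf' : Integrable (wedge.indicator f) (volume.prod volume) :=
    (integrable_indicator_iff measurableSet_wedge).2 hf
  rw [← integral_indicator measurableSet_wedge, Measure.volume_eq_prod, integral_prod _ hf',
    ← integral_Ici_eq_integral_Ioi, ← integral_indicator measurableSet_Ici]
  congr 1 with k
  by_cases hk : 0 ≤ k
  · rw [indicator_of_mem (mem_Ici.2 hk), ← integral_Ici_eq_integral_Ioi,
      ← integral_indicator measurableSet_Ici]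
    simp [indicator, wedge, hk]
  · simp [indicator, wedge, hk]

lemma setIntegral_wedge_symm (hf : IntegrableOn f wedge) :
    ∫ p in wedge, f p = ∫ h in Ioi 0, ∫ k in (0 : ℝ)..h, f (k, h) := by
  have hf' : Integrable (wedge.indicator f) (volume.prod volume) :=
    (integrable_indicator_iff measurableSet_wedge).2 hf
  rw [← integral_indicator measurableSet_wedge, Measure.volume_eq_prod, integral_prod_symm _ hf',
    ← integral_Ici_eq_integral_Ioi, ← integral_indicator measurableSet_Ici]
  congr 1 with h
  by_cases hh : 0 ≤ h
  · rw [indicator_of_mem (mem_Ici.2 hh), intervalIntegral.integral_of_le hh,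
      ← integral_Icc_eq_integral_Ioc, ← integral_indicator measurableSet_Icc]
    rfl
  · have hwedge (k : ℝ) : (k, h) ∉ wedge := fun hk => hh (hk.1.trans hk.2)
    simp [hwedge, hh]

end Wedge

section Mass

/-- The mass `∫₀ᵏ w` of the part of the half-line below `k`, for a density `w`. -/
noncomputable def lowerMass (w : ℝ → ℝ) (k : ℝ) : ℝ := ∫ x in (0 : ℝ)..k, w x

/-- The mass `∫ₕ^∞ w` of the tail above `h`, for a density `w`. -/
noncomputable def upperMass (w : ℝ → ℝ) (h : ℝ) : ℝ := ∫ x in Ioi h, w x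

variable {w v : ℝ → ℝ} {h k : ℝ}

lemma lowerMass_add_upperMass (hw : Integrable w) (h : ℝ) :
    lowerMass w h + upperMass w h = upperMass w 0 :=
  intervalIntegral.integral_interval_add_Ioi hw.integrableOn hw.integrableOn

lemma continuous_lowerMass (hw : Integrable w) : Continuous (lowerMass w) :=
  intervalIntegral.continuous_primitive (fun _ _ => hw.intervalIntegrable) 0

lemma continuous_upperMass (hw : Integrable w) : Continuous (upperMass w) := by
  have hsub : upperMass w = fun h => upperMass w 0 - lowerMass w h := by
    funext h
    rw [← lowerMass_add_upperMass hw h, add_sub_cancel_left]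
  rw [hsub]
  exact continuous_const.sub (continuous_lowerMass hw)

lemma lowerMass_nonneg (hw : ∀ x, 0 ≤ x → 0 ≤ w x) (hk : 0 ≤ k) : 0 ≤ lowerMass w k :=
  intervalIntegral.integral_nonneg hk fun x hx => hw x hx.1

lemma upperMass_nonneg (hw : ∀ x, 0 ≤ x → 0 ≤ w x) (hh : 0 ≤ h) : 0 ≤ upperMass w h :=
  setIntegral_nonneg measurableSet_Ioi fun x hx => hw x (hh.trans hx.le)

lemma lowerMass_le_upperMass_zero (hw₀ : ∀ x, 0 ≤ x → 0 ≤ w x) (hw : Integrable w) (hk : 0 ≤ k) :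
    lowerMass w k ≤ upperMass w 0 := by
  rw [← lowerMass_add_upperMass hw k]
  exact le_add_of_nonneg_right (upperMass_nonneg hw₀ hk)

end Mass

section Kernel

/-- The integrand `(∫₀ᵏ w)² / w k * ((∫ₕ^∞ w)² / w h)` whose integral over the wedge gives the
variance. Where `w` vanishes, division by zero makes it zero. -/
noncomputable def varianceKernel (w : ℝ → ℝ) (p : ℝ × ℝ) : ℝ :=
  lowerMass w p.1 ^ 2 / w p.1 * (upperMass w p.2 ^ 2 / w p.2)

/-- Domination of the density `w` by `v` on the half-line `[0, ∞)`, in the likelihood ratio order: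
`w / v` is decreasing and starts from at most `1`. -/
structure RatioDominated (w v : ℝ → ℝ) : Prop where
  pos : ∀ x, 0 ≤ x → 0 < v x
  nonneg : ∀ x, 0 ≤ x → 0 ≤ w x
  apply_zero_le : w 0 ≤ v 0
  antitoneOn_div : AntitoneOn (fun x => w x / v x) (Ici 0)

variable {w v : ℝ → ℝ} {h k x : ℝ} {p : ℝ × ℝ}

lemma varianceKernel_nonneg (hw : ∀ x, 0 ≤ x → 0 ≤ w x) (hp : p ∈ wedge) :
    0 ≤ varianceKernel w p :=
  mul_nonneg (div_nonneg (sq_nonneg _) (hw _ hp.1))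
    (div_nonneg (sq_nonneg _) (hw _ (hp.1.trans hp.2)))

lemma aestronglyMeasurable_varianceKernel (hw : Integrable w) :
    AEStronglyMeasurable (varianceKernel w) := by
  have hlower := (continuous_lowerMass hw).aemeasurable (μ := volume)
  have hupper := (continuous_upperMass hw).aemeasurable (μ := volume)
  have hw' := hw.aemeasurable
  exact (((hlower.pow_const 2).div hw').comp_fst.mul
    ((hupper.pow_const 2).div hw').comp_snd).aestronglyMeasurable

namespace RatioDominated

lemma apply_mul_apply_le (hwv : RatioDominated w v) (hk : 0 ≤ k) (hkh : k ≤ h) :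
    w h * v k ≤ w k * v h :=
  (div_le_div_iff₀ (hwv.pos h (hk.trans hkh)) (hwv.pos k hk)).1
    (hwv.antitoneOn_div hk (hk.trans hkh) hkh)

lemma le (hwv : RatioDominated w v) (hx : 0 ≤ x) : w x ≤ v x := by
  have hzero : w 0 / v 0 ≤ 1 := (div_le_one (hwv.pos 0 le_rfl)).2 hwv.apply_zero_le
  exact (div_le_one (hwv.pos x hx)).1
    ((hwv.antitoneOn_div self_mem_Ici hx hx).trans hzero)

lemma lowerMass_le (hwv : RatioDominated w v) (hw : Integrable w) (hv : Integrable v)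
    (hk : 0 ≤ k) : lowerMass w k ≤ lowerMass v k :=
  intervalIntegral.integral_mono_on hk hw.intervalIntegrable hv.intervalIntegrable
    fun _ hx => hwv.le hx.1

lemma upperMass_le (hwv : RatioDominated w v) (hw : Integrable w) (hv : Integrable v)
    (hh : 0 ≤ h) : upperMass w h ≤ w h / v h * upperMass v h := by
  rw [upperMass, upperMass, ← integral_const_mul]
  refine setIntegral_mono_on hw.integrableOn (hv.integrableOn.const_mul _) measurableSet_Ioi
    fun x hx => ?_
  rw [div_mul_eq_mul_div, le_div_iff₀ (hwv.pos h hh)]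
  exact hwv.apply_mul_apply_le hh hx.le

lemma varianceKernel_le (hwv : RatioDominated w v) (hw : Integrable w) (hv : Integrable v)
    (hp : p ∈ wedge) : varianceKernel w p ≤ varianceKernel v p := by
  obtain ⟨k, h⟩ := p
  obtain ⟨hk, hkh⟩ : 0 ≤ k ∧ k ≤ h := hp
  have hh : 0 ≤ h := hk.trans hkh
  have hvk := hwv.pos k hk
  have hvh := hwv.pos h hh
  obtain hwh | hwh := (hwv.nonneg h hh).eq_or_lt
  · simpa [varianceKernel, ← hwh] using
      varianceKernel_nonneg (p := (k, h)) (fun x hx => (hwv.pos x hx).le) ⟨hk, hkh⟩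
  have hratio := hwv.apply_mul_apply_le hk hkh
  have hwk : 0 < w k := pos_of_mul_pos_left ((mul_pos hwh hvk).trans_le hratio) hvh.le
  have hlower : lowerMass w k ^ 2 ≤ lowerMass v k ^ 2 :=
    pow_le_pow_left₀ (lowerMass_nonneg hwv.nonneg hk) (hwv.lowerMass_le hw hv hk) 2
  have hupper : upperMass w h ^ 2 ≤ (w h / v h * upperMass v h) ^ 2 :=
    pow_le_pow_left₀ (upperMass_nonneg hwv.nonneg hh) (hwv.upperMass_le hw hv hh) 2
  calc lowerMass w k ^ 2 / w k * (upperMass w h ^ 2 / w h)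
      ≤ lowerMass v k ^ 2 / w k * ((w h / v h * upperMass v h) ^ 2 / w h) := by gcongr
    _ = lowerMass v k ^ 2 * upperMass v h ^ 2 / v h ^ 2 * (w h / w k) := by field_simp
    _ ≤ lowerMass v k ^ 2 * upperMass v h ^ 2 / v h ^ 2 * (v h / v k) := by
      gcongr ?_ * ?_
      rw [div_le_div_iff₀ hwk hvk]
      linarith
    _ = lowerMass v k ^ 2 / v k * (upperMass v h ^ 2 / v h) := by field_simp

lemma ae_norm_varianceKernel_le (hwv : RatioDominated w v) (hw : Integrable w)
    (hv : Integrable v) :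
    ∀ᵐ p ∂volume.restrict wedge, ‖varianceKernel w p‖ ≤ varianceKernel v p := by
  filter_upwards [ae_restrict_mem measurableSet_wedge] with p hp
  rw [norm_of_nonneg (varianceKernel_nonneg hwv.nonneg hp)]
  exact hwv.varianceKernel_le hw hv hp

lemma integrableOn_varianceKernel (hwv : RatioDominated w v) (hw : Integrable w)
    (hv : Integrable v) (hvv : IntegrableOn (varianceKernel v) wedge) :
    IntegrableOn (varianceKernel w) wedge :=
  hvv.mono' (aestronglyMeasurable_varianceKernel hw).restrict
    (hwv.ae_norm_varianceKernel_le hw hv)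

end RatioDominated

variable {ι : Type*} {l : Filter ι} [l.IsCountablyGenerated] {W : ι → ℝ → ℝ}

lemma tendsto_upperMass (hW : ∀ᶠ i in l, Integrable (W i)) (hv : Integrable v)
    (hdom : ∀ᶠ i in l, RatioDominated (W i) v)
    (hlim : ∀ x, 0 ≤ x → Tendsto (W · x) l (𝓝 (v x))) (hh : 0 ≤ h) :
    Tendsto (fun i => upperMass (W i) h) l (𝓝 (upperMass v h)) := by
  refine tendsto_integral_filter_of_dominated_convergence v
    (hW.mono fun i hi => hi.aestronglyMeasurable.restrict) ?_ hv.integrableOn ?_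
  · filter_upwards [hdom] with i hi
    filter_upwards [ae_restrict_mem measurableSet_Ioi] with x hx
    have hx₀ : 0 ≤ x := hh.trans hx.le
    rw [norm_of_nonneg (hi.nonneg x hx₀)]
    exact hi.le hx₀
  · filter_upwards [ae_restrict_mem measurableSet_Ioi] with x hx
    exact hlim x (hh.trans hx.le)

lemma tendsto_lowerMass (hW : ∀ᶠ i in l, Integrable (W i)) (hv : Integrable v)
    (hdom : ∀ᶠ i in l, RatioDominated (W i) v)
    (hlim : ∀ x, 0 ≤ x → Tendsto (W · x) l (𝓝 (v x))) (hk : 0 ≤ k) :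
    Tendsto (fun i => lowerMass (W i) k) l (𝓝 (lowerMass v k)) := by
  rw [eq_sub_of_add_eq (lowerMass_add_upperMass hv k)]
  refine ((tendsto_upperMass hW hv hdom hlim le_rfl).sub
    (tendsto_upperMass hW hv hdom hlim hk)).congr' ?_
  filter_upwards [hW] with i hi
  exact (eq_sub_of_add_eq (lowerMass_add_upperMass hi k)).symm

theorem tendsto_setIntegral_varianceKernel (hW : ∀ᶠ i in l, Integrable (W i))
    (hv : Integrable v) (hdom : ∀ᶠ i in l, RatioDominated (W i) v)
    (hlim : ∀ x, 0 ≤ x → Tendsto (W · x) l (𝓝 (v x)))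
    (hvv : IntegrableOn (varianceKernel v) wedge) :
    Tendsto (fun i => ∫ p in wedge, varianceKernel (W i) p) l
      (𝓝 (∫ p in wedge, varianceKernel v p)) := by
  obtain rfl | _ := l.eq_or_neBot
  · exact tendsto_bot
  have hv_ne : ∀ x, 0 ≤ x → v x ≠ 0 := fun x hx =>
    let ⟨_, hi⟩ := hdom.exists
    (hi.pos x hx).ne'
  refine tendsto_integral_filter_of_dominated_convergence (varianceKernel v)
    (hW.mono fun i hi => (aestronglyMeasurable_varianceKernel hi).restrict) ?_ hvv ?_
  · filter_upwards [hW, hdom] with i hi hi'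
    exact hi'.ae_norm_varianceKernel_le hi hv
  · filter_upwards [ae_restrict_mem measurableSet_wedge] with p ⟨hk, hkh⟩
    have hh : 0 ≤ p.2 := hk.trans hkh
    exact (((tendsto_lowerMass hW hv hdom hlim hk).pow 2).div (hlim _ hk) (hv_ne _ hk)).mul
      (((tendsto_upperMass hW hv hdom hlim hh).pow 2).div (hlim _ hh) (hv_ne _ hh))

end Kernel

section Rescaling

/-- The variance of the first covering time of the dual of the radial diffusion on `[0, R]` with
volume density `j`, encoded by its iterated integral. Writing `J` for the primitive of `j` from `0`,
the paper has `J R - J t` for `∫ s in t..R, j s`. -/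
noncomputable def coveringVariance (j : ℝ → ℝ) (R : ℝ) : ℝ :=
  2 / (∫ s in (0 : ℝ)..R, j s) ^ 2 *
    ∫ u in (0 : ℝ)..R, (∫ s in (0 : ℝ)..u, j s) ^ 2 / j u *
      ∫ t in u..R, (∫ s in t..R, j s) ^ 2 / j t

/-- The density `j` on `[0, R]` seen from the end `R`, with distances to `R` divided by `c`. -/
noncomputable def endpointWeight (j : ℝ → ℝ) (R c : ℝ) : ℝ → ℝ :=
  (Icc 0 (R / c)).indicator fun x => j (R - c * x)

variable {j : ℝ → ℝ} {R c x : ℝ}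

lemma endpointWeight_of_mem (hx : x ∈ Icc 0 (R / c)) :
    endpointWeight j R c x = j (R - c * x) :=
  indicator_of_mem hx _

lemma endpointWeight_of_notMem (hx : x ∉ Icc 0 (R / c)) : endpointWeight j R c x = 0 :=
  indicator_of_notMem hx _

lemma mul_lowerMass_endpointWeight (hx : x ∈ Icc 0 (R / c)) :
    c * lowerMass (endpointWeight j R c) x = ∫ s in (R - c * x)..R, j s := by
  have hcongr : lowerMass (endpointWeight j R c) x = ∫ y in (0 : ℝ)..x, j (R - c * y) := by
    refine intervalIntegral.integral_congr fun y hy => endpointWeight_of_mem ?_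
    rw [uIcc_of_le hx.1] at hy
    exact ⟨hy.1, hy.2.trans hx.2⟩
  rw [hcongr, intervalIntegral.mul_integral_comp_sub_mul, mul_zero, sub_zero]

lemma mul_upperMass_endpointWeight (hc : c ≠ 0) (hx : x ∈ Icc 0 (R / c)) :
    c * upperMass (endpointWeight j R c) x = ∫ s in (0 : ℝ)..(R - c * x), j s := by
  have hinter : Ioi x ∩ Icc 0 (R / c) = Ioc x (R / c) := by
    ext y
    exact ⟨fun hy => ⟨hy.1, hy.2.2⟩, fun hy => ⟨hy.1, hx.1.trans hy.1.le, hy.2⟩⟩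
  rw [upperMass, endpointWeight, setIntegral_indicator measurableSet_Icc, hinter,
    ← intervalIntegral.integral_of_le hx.2, intervalIntegral.mul_integral_comp_sub_mul,
    mul_div_cancel₀ _ hc, sub_self]

lemma integral_sq_div_eq_endpointWeight (hx : x ∈ Icc 0 (R / c)) :
    ∫ t in (R - c * x)..R, (∫ s in t..R, j s) ^ 2 / j t =
      c ^ 3 * ∫ k in (0 : ℝ)..x,
        lowerMass (endpointWeight j R c) k ^ 2 / endpointWeight j R c k := by
  have hcongr : ∫ k in (0 : ℝ)..x, (∫ s in (R - c * k)..R, j s) ^ 2 / j (R - c * k) =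
      ∫ k in (0 : ℝ)..x,
        c ^ 2 * (lowerMass (endpointWeight j R c) k ^ 2 / endpointWeight j R c k) := by
    refine intervalIntegral.integral_congr fun k hk => ?_
    rw [uIcc_of_le hx.1] at hk
    have hk' : k ∈ Icc 0 (R / c) := ⟨hk.1, hk.2.trans hx.2⟩
    simp only [← mul_lowerMass_endpointWeight hk', endpointWeight_of_mem hk']
    ring
  have hsubst := intervalIntegral.mul_integral_comp_sub_mul (a := 0) (b := x) (c := c)
    (d := R) (f := fun t => (∫ s in t..R, j s) ^ 2 / j t)
  rw [mul_zero, sub_zero] at hsubst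
  rw [← hsubst, hcongr, intervalIntegral.integral_const_mul]
  ring

lemma setIntegral_varianceKernel_endpointWeight (hR : 0 ≤ R / c)
    (hint : IntegrableOn (varianceKernel (endpointWeight j R c)) wedge) :
    ∫ p in wedge, varianceKernel (endpointWeight j R c) p =
      ∫ h in (0 : ℝ)..(R / c),
        (∫ k in (0 : ℝ)..h, lowerMass (endpointWeight j R c) k ^ 2 / endpointWeight j R c k) *
          (upperMass (endpointWeight j R c) h ^ 2 / endpointWeight j R c h) := by
  rw [setIntegral_wedge_symm hint, intervalIntegral.integral_of_le hR]
  simp only [varianceKernel, intervalIntegral.integral_mul_const]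
  refine setIntegral_eq_of_subset_of_forall_sdiff_eq_zero measurableSet_Ioi Ioc_subset_Ioi_self
    fun h hh => ?_
  rw [endpointWeight_of_notMem fun hmem => hh.2 ⟨hh.1, hmem.2⟩, div_zero, mul_zero]

theorem coveringVariance_eq_setIntegral_varianceKernel (hc : 0 < c) (hR : 0 ≤ R)
    (hint : IntegrableOn (varianceKernel (endpointWeight j R c)) wedge) :
    coveringVariance j R = 2 * c ^ 4 / upperMass (endpointWeight j R c) 0 ^ 2 *
      ∫ p in wedge, varianceKernel (endpointWeight j R c) p := by
  have hL : 0 ≤ R / c := div_nonneg hR hc.le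
  have houter := intervalIntegral.mul_integral_comp_sub_mul (a := 0) (b := R / c) (c := c)
    (d := R) (f := fun u =>
      (∫ s in (0 : ℝ)..u, j s) ^ 2 / j u * ∫ t in u..R, (∫ s in t..R, j s) ^ 2 / j t)
  have hcongr : ∫ x in (0 : ℝ)..(R / c), (∫ s in (0 : ℝ)..(R - c * x), j s) ^ 2 / j (R - c * x) *
        ∫ t in (R - c * x)..R, (∫ s in t..R, j s) ^ 2 / j t =
      c ^ 5 * ∫ p in wedge, varianceKernel (endpointWeight j R c) p := by
    rw [setIntegral_varianceKernel_endpointWeight hL hint, ← intervalIntegral.integral_const_mul]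
    refine intervalIntegral.integral_congr fun x hx => ?_
    rw [uIcc_of_le hL] at hx
    simp only [← mul_upperMass_endpointWeight hc.ne' hx, integral_sq_div_eq_endpointWeight hx,
      endpointWeight_of_mem hx]
    ring
  have htotal := mul_upperMass_endpointWeight (j := j) hc.ne' (left_mem_Icc.2 hL)
  rw [mul_zero, sub_zero] at htotal
  rw [mul_zero, sub_zero, mul_div_cancel₀ _ hc.ne', sub_self, hcongr] at houter
  rw [coveringVariance, ← houter, ← htotal]
  field_simp

end Rescaling

section Gaussian

/-- The unnormalized standard Gaussian density. -/
noncomputable def gaussianWeight (x : ℝ) : ℝ := exp (-x ^ 2 / 2)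

lemma gaussianWeight_pos (x : ℝ) : 0 < gaussianWeight x := exp_pos _

lemma gaussianWeight_le_one (x : ℝ) : gaussianWeight x ≤ 1 :=
  exp_le_one_iff.2 (by linarith [sq_nonneg x])

lemma inv_gaussianWeight (x : ℝ) : (gaussianWeight x)⁻¹ = exp (x ^ 2 / 2) := by
  rw [gaussianWeight, ← exp_neg, neg_div, neg_neg]

lemma gaussianWeight_eq_exp_neg_mul_sq :
    gaussianWeight = fun x => exp (-(1 / 2) * x ^ 2) := by
  funext x
  rw [gaussianWeight]
  ring_nf

lemma integrable_gaussianWeight : Integrable gaussianWeight := by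
  rw [gaussianWeight_eq_exp_neg_mul_sq]
  exact integrable_exp_neg_mul_sq (by norm_num)

lemma sq_upperMass_gaussianWeight_zero : upperMass gaussianWeight 0 ^ 2 = π / 2 := by
  rw [upperMass, gaussianWeight_eq_exp_neg_mul_sq, integral_gaussian_Ioi, div_pow,
    sq_sqrt (by positivity)]
  ring

variable {h k : ℝ}

/-- Mills' bound: for `x > h`, the density is at most `exp (h ^ 2 / 2) * exp (-h * x)`. -/
lemma upperMass_gaussianWeight_le_div (hh : 0 < h) :
    upperMass gaussianWeight h ≤ gaussianWeight h / h := by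
  have hneg : -h < 0 := neg_lt_zero.2 hh
  calc upperMass gaussianWeight h
      ≤ ∫ x in Ioi h, exp (h ^ 2 / 2) * exp (-h * x) := by
        refine setIntegral_mono_on integrable_gaussianWeight.integrableOn
          ((integrableOn_exp_mul_Ioi hneg h).const_mul _) measurableSet_Ioi fun x _ => ?_
        rw [gaussianWeight, ← exp_add, exp_le_exp]
        linarith [sq_nonneg (x - h)]
    _ = gaussianWeight h / h := by
        rw [integral_const_mul, integral_exp_mul_Ioi hneg, neg_div_neg_eq, ← mul_div_assoc,
          ← exp_add, gaussianWeight]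
        ring_nf

lemma lowerMass_gaussianWeight_le_self (hk : 0 ≤ k) : lowerMass gaussianWeight k ≤ k := by
  simpa [lowerMass] using intervalIntegral.integral_mono_on hk
    integrable_gaussianWeight.intervalIntegrable intervalIntegrable_const
    fun x _ => gaussianWeight_le_one x

lemma sq_lowerMass_gaussianWeight_le (hk : 0 ≤ k) :
    lowerMass gaussianWeight k ^ 2 ≤ 3 * (1 + k ^ 2)⁻¹ * k ^ 2 := by
  have hnonneg : ∀ x, 0 ≤ x → 0 ≤ gaussianWeight x := fun x _ => (gaussianWeight_pos x).le
  have hmass : 0 ≤ lowerMass gaussianWeight k := lowerMass_nonneg hnonneg hk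
  have hself : lowerMass gaussianWeight k ^ 2 ≤ k ^ 2 :=
    pow_le_pow_left₀ hmass (lowerMass_gaussianWeight_le_self hk) 2
  have htwo : lowerMass gaussianWeight k ^ 2 ≤ 2 := by
    calc lowerMass gaussianWeight k ^ 2 ≤ upperMass gaussianWeight 0 ^ 2 :=
          pow_le_pow_left₀ hmass
            (lowerMass_le_upperMass_zero hnonneg integrable_gaussianWeight hk) 2
      _ ≤ 2 := by linarith [sq_upperMass_gaussianWeight_zero, pi_le_four]
  rw [← div_eq_mul_inv, div_mul_eq_mul_div, le_div_iff₀ (by positivity)]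
  nlinarith [mul_le_mul_of_nonneg_right htwo (sq_nonneg k)]

lemma gaussianWeight_div_le (hk : 0 ≤ k) (hkh : k ≤ h) :
    gaussianWeight h / gaussianWeight k ≤ gaussianWeight (h - k) := by
  simp only [gaussianWeight]
  rw [← exp_sub, exp_le_exp]
  linarith [mul_nonneg hk (sub_nonneg.2 hkh)]

lemma varianceKernel_gaussianWeight_le {p : ℝ × ℝ} (hp : p ∈ wedge) :
    varianceKernel gaussianWeight p ≤ 3 * ((1 + p.1 ^ 2)⁻¹ * gaussianWeight (p.2 - p.1)) := by
  obtain ⟨k, h⟩ := p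
  obtain ⟨hk, hkh⟩ : 0 ≤ k ∧ k ≤ h := hp
  have hgk := gaussianWeight_pos k
  have hgh := gaussianWeight_pos h
  obtain rfl | hk := hk.eq_or_lt
  · simpa [varianceKernel, lowerMass] using hgh.le
  have hh : 0 < h := hk.trans_le hkh
  have hupper : upperMass gaussianWeight h ≤ gaussianWeight h / k :=
    (upperMass_gaussianWeight_le_div hh).trans (by gcongr)
  have hupper₀ : 0 ≤ upperMass gaussianWeight h :=
    upperMass_nonneg (fun x _ => (gaussianWeight_pos x).le) hh.le
  calc lowerMass gaussianWeight k ^ 2 / gaussianWeight k *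
        (upperMass gaussianWeight h ^ 2 / gaussianWeight h)
      ≤ 3 * (1 + k ^ 2)⁻¹ * k ^ 2 / gaussianWeight k *
        ((gaussianWeight h / k) ^ 2 / gaussianWeight h) := by
        gcongr
        exact sq_lowerMass_gaussianWeight_le hk.le
    _ = 3 * (1 + k ^ 2)⁻¹ * (gaussianWeight h / gaussianWeight k) := by field_simp
    _ ≤ 3 * (1 + k ^ 2)⁻¹ * gaussianWeight (h - k) := by
        gcongr
        exact gaussianWeight_div_le hk.le hkh
    _ = 3 * ((1 + k ^ 2)⁻¹ * gaussianWeight (h - k)) := mul_assoc _ _ _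

theorem integrableOn_varianceKernel_gaussianWeight :
    IntegrableOn (varianceKernel gaussianWeight) wedge := by
  have hbound : Integrable fun p : ℝ × ℝ =>
      3 * ((1 + p.1 ^ 2)⁻¹ * gaussianWeight (p.2 - p.1)) :=
    (Integrable.convolution_integrand (ContinuousLinearMap.mul ℝ ℝ) integrable_inv_one_add_sq
      integrable_gaussianWeight).swap.const_mul 3
  refine hbound.integrableOn.mono'
    (aestronglyMeasurable_varianceKernel integrable_gaussianWeight).restrict ?_
  filter_upwards [ae_restrict_mem measurableSet_wedge] with p hp
  rw [norm_of_nonneg (varianceKernel_nonneg (fun x _ => (gaussianWeight_pos x).le) hp)]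
  exact varianceKernel_gaussianWeight_le hp

lemma varianceKernel_gaussianWeight (p : ℝ × ℝ) :
    varianceKernel gaussianWeight p =
      exp (p.1 ^ 2 / 2) * (∫ x in (0 : ℝ)..p.1, exp (-x ^ 2 / 2)) ^ 2 *
        (exp (p.2 ^ 2 / 2) * (∫ x in Ioi p.2, exp (-x ^ 2 / 2)) ^ 2) := by
  rw [varianceKernel, div_eq_inv_mul, div_eq_inv_mul, inv_gaussianWeight, inv_gaussianWeight]
  rfl

lemma NRP_eq_setIntegral_varianceKernel :
    NRP = 2 ^ 4 / π * ∫ p in wedge, varianceKernel gaussianWeight p := by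
  rw [NRP, setIntegral_wedge integrableOn_varianceKernel_gaussianWeight]
  simp only [varianceKernel_gaussianWeight, integral_const_mul]

end Gaussian

section Cosine

lemma antitoneOn_cos_mul_exp_sq :
    AntitoneOn (fun x => cos x * exp (x ^ 2 / 2)) (Icc 0 (π / 2)) := by
  refine antitoneOn_of_deriv_nonpos (convex_Icc _ _) (by fun_prop) (by fun_prop) fun x hx => ?_
  rw [interior_Icc] at hx
  have hderiv : HasDerivAt (fun x => cos x * exp (x ^ 2 / 2))
      (-sin x * exp (x ^ 2 / 2) + cos x * (exp (x ^ 2 / 2) * x)) x := by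
    refine (hasDerivAt_cos x).mul (HasDerivAt.exp ?_)
    exact (((hasDerivAt_id' x).pow 2).div_const 2).congr_deriv (by norm_num)
  have hcos : 0 < cos x := cos_pos_of_mem_Ioo ⟨by linarith [hx.1, pi_pos], hx.2⟩
  have htan : x * cos x < sin x := by
    rw [← lt_div_iff₀ hcos, ← tan_eq_sin_div_cos]
    exact lt_tan hx.1 hx.2
  rw [hderiv.deriv]
  linarith [mul_le_mul_of_nonneg_left htan.le (exp_pos (x ^ 2 / 2)).le]

lemma cos_sub_one_eq_sinc (x : ℝ) : cos x - 1 = -x ^ 2 / 2 * sinc (x / 2) ^ 2 := by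
  have hsin : x / 2 * sinc (x / 2) = sin (x / 2) := by
    obtain rfl | hx := eq_or_ne x 0
    · simp
    · rw [sinc_of_ne_zero (by positivity)]
      field_simp
  have hcos : cos x = 1 - 2 * sin (x / 2) ^ 2 := by
    rw [sin_sq_eq_half_sub, mul_div_cancel₀ _ two_ne_zero]
    ring
  rw [hcos, ← hsin]
  ring

lemma tendsto_cos_div_sqrt_pow (x : ℝ) :
    Tendsto (fun m : ℕ => cos (x / √m) ^ m) atTop (𝓝 (gaussianWeight x)) := by
  have hdiv : Tendsto (fun m : ℕ => x / √m / 2) atTop (𝓝 0) := by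
    simpa using (tendsto_const_nhds.div_atTop
      (tendsto_sqrt_atTop.comp tendsto_natCast_atTop_atTop)).div_const 2
  have hsinc : Tendsto (fun m : ℕ => -x ^ 2 / 2 * sinc (x / √m / 2) ^ 2) atTop
      (𝓝 (-x ^ 2 / 2)) := by
    simpa using (((continuous_sinc.tendsto 0).comp hdiv).pow 2).const_mul (-x ^ 2 / 2)
  have hmul : Tendsto (fun m : ℕ => (m : ℝ) * (cos (x / √m) - 1)) atTop (𝓝 (-x ^ 2 / 2)) := by
    refine hsinc.congr' ?_
    filter_upwards [eventually_gt_atTop 0] with m hm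
    rw [cos_sub_one_eq_sinc, div_pow, sq_sqrt m.cast_nonneg]
    field_simp
  simpa [gaussianWeight] using tendsto_one_add_pow_exp_of_tendsto hmul

/-- The density `sin ^ m (s / 2)` on `[0, π]` seen from `π` at scale `2 / √m`. This choice of scale
makes the Gaussian limit standard. -/
noncomputable def sineWeight (m : ℕ) : ℝ → ℝ :=
  endpointWeight (fun s => sin (s / 2) ^ m) π (2 / √m)

variable {m : ℕ} {x : ℝ}

lemma sineWeight_of_mem (hx : x ∈ Icc 0 (π / (2 / √m))) : sineWeight m x = cos (x / √m) ^ m := by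
  rw [sineWeight, endpointWeight_of_mem hx, ← cos_pi_div_two_sub]
  ring_nf

lemma sineWeight_of_notMem (hx : x ∉ Icc 0 (π / (2 / √m))) : sineWeight m x = 0 :=
  endpointWeight_of_notMem hx

lemma div_sqrt_mem_Icc (hx : x ∈ Icc 0 (π / (2 / √m))) : x / √m ∈ Icc 0 (π / 2) := by
  refine ⟨div_nonneg hx.1 (sqrt_nonneg _), div_le_of_le_mul₀ (sqrt_nonneg _) (by positivity) ?_⟩
  rw [div_mul_eq_mul_div, ← div_div_eq_mul_div]
  exact hx.2

lemma sineWeight_nonneg (m : ℕ) (x : ℝ) : 0 ≤ sineWeight m x := by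
  by_cases hx : x ∈ Icc 0 (π / (2 / √m))
  · have hmem := div_sqrt_mem_Icc hx
    rw [sineWeight_of_mem hx]
    exact pow_nonneg (cos_nonneg_of_mem_Icc ⟨by linarith [hmem.1, pi_pos], hmem.2⟩) m
  · exact (sineWeight_of_notMem hx).ge

lemma integrable_sineWeight (m : ℕ) : Integrable (sineWeight m) :=
  (Continuous.integrableOn_Icc (by fun_prop)).integrable_indicator measurableSet_Icc

lemma sineWeight_div_gaussianWeight (hm : 0 < m) (hx : x ∈ Icc 0 (π / (2 / √m))) :
    sineWeight m x / gaussianWeight x = (cos (x / √m) * exp ((x / √m) ^ 2 / 2)) ^ m := by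
  rw [sineWeight_of_mem hx, div_eq_mul_inv, inv_gaussianWeight, mul_pow, ← exp_nat_mul, div_pow,
    sq_sqrt m.cast_nonneg]
  congr 2
  field_simp

lemma ratioDominated_sineWeight (hm : 0 < m) : RatioDominated (sineWeight m) gaussianWeight where
  pos x _ := gaussianWeight_pos x
  nonneg x _ := sineWeight_nonneg m x
  apply_zero_le := by
    rw [sineWeight_of_mem (left_mem_Icc.2 (by positivity))]
    simp [gaussianWeight]
  antitoneOn_div := by
    intro k hk h _ hkh
    by_cases hh : h ∈ Icc 0 (π / (2 / √m))
    · have hk' : k ∈ Icc 0 (π / (2 / √m)) := ⟨hk, hkh.trans hh.2⟩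
      have hh_mem := div_sqrt_mem_Icc hh
      have hcos : 0 ≤ cos (h / √m) :=
        cos_nonneg_of_mem_Icc ⟨by linarith [hh_mem.1, pi_pos], hh_mem.2⟩
      simp only [sineWeight_div_gaussianWeight hm hh, sineWeight_div_gaussianWeight hm hk']
      exact pow_le_pow_left₀ (by positivity)
        (antitoneOn_cos_mul_exp_sq (div_sqrt_mem_Icc hk') hh_mem (by gcongr)) m
    · simp only [sineWeight_of_notMem hh, zero_div]
      exact div_nonneg (sineWeight_nonneg m k) (gaussianWeight_pos k).le

lemma tendsto_sineWeight (hx : 0 ≤ x) :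
    Tendsto (fun m => sineWeight m x) atTop (𝓝 (gaussianWeight x)) := by
  refine (tendsto_cos_div_sqrt_pow x).congr' ?_
  have hlength : Tendsto (fun m : ℕ => π / (2 / √m)) atTop atTop := by
    simp only [div_div_eq_mul_div]
    exact ((tendsto_sqrt_atTop.comp tendsto_natCast_atTop_atTop).const_mul_atTop
      pi_pos).atTop_div_const two_pos
  filter_upwards [hlength.eventually_ge_atTop x] with m hm
  exact (sineWeight_of_mem ⟨hx, hm⟩).symm

end Cosine

section ProjectiveSpace

lemma VRP_eq_coveringVariance (n : ℕ) :
    VRP n = coveringVariance (fun s => sin (s / 2) ^ (n - 1)) π := by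
  have hint (a b : ℝ) : IntervalIntegrable (fun s => sin (s / 2) ^ (n - 1)) volume a b :=
    Continuous.intervalIntegrable (by fun_prop) a b
  have hsub (s : ℝ) : Jn n π - Jn n s = ∫ t in s..π, sin (t / 2) ^ (n - 1) :=
    intervalIntegral.integral_interval_sub_left (hint _ _) (hint _ _)
  simp only [VRP, hsub]
  rfl

lemma sq_mul_VRP_succ {m : ℕ} (hm : 0 < m) :
    (m : ℝ) ^ 2 * VRP (m + 1) =
      32 / upperMass (sineWeight m) 0 ^ 2 * ∫ p in wedge, varianceKernel (sineWeight m) p := by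
  have hscale : (2 / √m : ℝ) ^ 4 = 16 / m ^ 2 := by
    rw [div_pow, show (√m : ℝ) ^ 4 = (√m ^ 2) ^ 2 by ring, sq_sqrt m.cast_nonneg]
    norm_num
  have hint := (ratioDominated_sineWeight hm).integrableOn_varianceKernel
    (integrable_sineWeight m) integrable_gaussianWeight integrableOn_varianceKernel_gaussianWeight
  rw [VRP_eq_coveringVariance, Nat.add_sub_cancel,
    coveringVariance_eq_setIntegral_varianceKernel (by positivity) pi_pos.le hint, hscale,
    sineWeight]
  field_simp
  ring

lemma four_mul_NRP : 4 * NRP = 32 / upperMass gaussianWeight 0 ^ 2 *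
    ∫ p in wedge, varianceKernel gaussianWeight p := by
  rw [NRP_eq_setIntegral_varianceKernel, sq_upperMass_gaussianWeight_zero]
  ring

theorem tendsto_sq_mul_VRP_succ :
    Tendsto (fun m : ℕ => (m : ℝ) ^ 2 * VRP (m + 1)) atTop (𝓝 (4 * NRP)) := by
  have hint := Eventually.of_forall (f := atTop) integrable_sineWeight
  have hdom : ∀ᶠ m in atTop, RatioDominated (sineWeight m) gaussianWeight :=
    (eventually_gt_atTop 0).mono fun _ => ratioDominated_sineWeight
  have hmass := tendsto_upperMass hint integrable_gaussianWeight hdom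
    (fun _ => tendsto_sineWeight) le_rfl
  have hkernel := tendsto_setIntegral_varianceKernel hint integrable_gaussianWeight hdom
    (fun _ => tendsto_sineWeight) integrableOn_varianceKernel_gaussianWeight
  have hmass_ne : upperMass gaussianWeight 0 ^ 2 ≠ 0 := by
    rw [sq_upperMass_gaussianWeight_zero]
    positivity
  rw [four_mul_NRP]
  refine ((tendsto_const_nhds.div (hmass.pow 2) hmass_ne).mul hkernel).congr' ?_
  filter_upwards [eventually_gt_atTop 0] with m hm
  exact (sq_mul_VRP_succ hm).symm

end ProjectiveSpace

end CoveringVariance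

theorem rp_variance_asymptotics :
    IntegrableOn
        (fun p : ℝ × ℝ =>
          Real.exp (p.1^2/2) * (∫ x in (0:ℝ)..p.1, Real.exp (-x^2/2))^2 *
            (Real.exp (p.2^2/2) * (∫ h₁ in Ioi p.2, Real.exp (-h₁^2/2))^2))
        {p : ℝ × ℝ | 0 ≤ p.1 ∧ p.1 ≤ p.2} volume ∧
      Tendsto (fun n : ℕ => ((n:ℝ) - 1)^2 * VRP n) atTop (nhds (4 * NRP)) := by
  constructor
  · exact CoveringVariance.integrableOn_varianceKernel_gaussianWeight.congr_fun
      (fun p _ => CoveringVariance.varianceKernel_gaussianWeight p)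
      CoveringVariance.measurableSet_wedge
  · rw [← tendsto_add_atTop_iff_nat 1]
    simpa using CoveringVariance.tendsto_sq_mul_VRP_succ
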